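/- arXiv:1311.2110 — 6 statements merged into one kernel-verified Lean document; each statement's English description precedes it below -/
import Mathlib

section
/- Let f be a monotone, normalized, submodular function on a finite ground set V with f({j}) > 0 for every j ∈ V, and suppose its total curvature κ_f is positive. Then the curve-normalized version f^κ, defined by f^κ(X) = (f(X) − (1 − κ_f) Σ_{j∈X} f({j})) / κ_f, is a monotone, nonnegative, normalized submodular function, and moreover f^κ(X) ≤ Σ_{j∈X} f({j}) for all X ⊆ V. -/
/-!
Subtracting the modular function `(1 - κ) ∑ f {j}` and dividing by `κ > 0` preserves submodularity.
Monotonicity can be checked one element at a time: for `j ∉ S`, diminishing returns give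
`f (j | S) ≥ f (j | V ∖ {j})` (`gain_univ_le_gain`), and the latter is at least `(1 - κ) f {j}` by
the choice of `κ` as one minus the minimal ratio. Nonnegativity follows from monotonicity and
`f^κ ∅ = 0`. Finally, `f^κ X ≤ ∑ f {j}` is equivalent to the subadditivity bound
`f X ≤ ∑ f {j}` (`le_sum_singleton`).
-/

open Finset

lemma gain_univ_le_gain {V : Type*} [Fintype V] [DecidableEq V] {f : Finset V → ℝ}
    (hsub : ∀ S T : Finset V, f S + f T ≥ f (S ∪ T) + f (S ∩ T))
    {j : V} {S : Finset V} (hj : j ∉ S) :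
    f univ - f (univ \ {j}) ≤ f (insert j S) - f S := by
  have h := hsub (insert j S) (univ \ {j})
  have hunion : insert j S ∪ univ \ {j} = univ := by
    ext x; by_cases hx : x = j <;> simp [hx]
  have hinter : insert j S ∩ (univ \ {j}) = S := by
    ext x; by_cases hx : x = j <;> simp [hx, hj]
  rw [hunion, hinter] at h
  linarith

lemma le_sum_singleton {V : Type*} [DecidableEq V] {f : Finset V → ℝ}
    (hsub : ∀ S T : Finset V, f S + f T ≥ f (S ∪ T) + f (S ∩ T))
    (hnorm : f ∅ = 0) (X : Finset V) : f X ≤ ∑ j ∈ X, f {j} := by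
  induction X using Finset.induction_on with
  | empty => simp [hnorm]
  | insert j S hj ih =>
    have h := hsub {j} S
    rw [← insert_eq, singleton_inter_of_notMem hj, hnorm] at h
    rw [sum_insert hj]
    linarith

/-- Lemma 2: the curve-normalized version `f^κ` of a monotone normalized
submodular function with positive curvature is a monotone, nonnegative,
normalized submodular function, and `f^κ X ≤ ∑_{j ∈ X} f {j}`. -/
theorem curveNormalized_polymatroid
    {V : Type*} [Fintype V] [DecidableEq V] [Nonempty V]
    (f : Finset V → ℝ)
    (hsub : ∀ S T : Finset V, f S + f T ≥ f (S ∪ T) + f (S ∩ T))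
    (hmono : ∀ S T : Finset V, S ⊆ T → f S ≤ f T)
    (hnorm : f ∅ = 0)
    (hpos : ∀ j : V, 0 < f {j})
    (κ : ℝ)
    (hκ : κ = 1 - univ.inf' univ_nonempty
      (fun j : V => (f univ - f (univ \ {j})) / f {j}))
    (hκpos : 0 < κ)
    (fκ : Finset V → ℝ)
    (hfκ : ∀ X : Finset V, fκ X = (f X - (1 - κ) * ∑ j ∈ X, f {j}) / κ) :
    (∀ S T : Finset V, fκ S + fκ T ≥ fκ (S ∪ T) + fκ (S ∩ T)) ∧
    (∀ S T : Finset V, S ⊆ T → fκ S ≤ fκ T) ∧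
    (∀ X : Finset V, 0 ≤ fκ X) ∧
    fκ ∅ = 0 ∧
    (∀ X : Finset V, fκ X ≤ ∑ j ∈ X, f {j}) := by
  have hempty : fκ ∅ = 0 := by simp [hfκ, hnorm]
  have hstep : ∀ (j : V) (S : Finset V), j ∉ S → fκ S ≤ fκ (insert j S) := by
    intro j S hj
    have hmin : 1 - κ ≤ (f univ - f (univ \ {j})) / f {j} := by
      have h := inf'_le (fun j : V => (f univ - f (univ \ {j})) / f {j}) (mem_univ j)
      linarith
    rw [le_div_iff₀ (hpos j)] at hmin
    have hgain := gain_univ_le_gain hsub hj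
    rw [hfκ, hfκ, sum_insert hj]
    gcongr ?_ / κ
    linarith
  have hmonoκ : ∀ S T : Finset V, S ⊆ T → fκ S ≤ fκ T := by
    intro S T hST
    exact monotone_iff_forall_le_insert.2 (fun S j hj => hstep j S hj) hST
  refine ⟨?_, hmonoκ, ?_, hempty, ?_⟩
  · intro S T
    have h := hsub S T
    have hsum := sum_union_inter (s₁ := S) (s₂ := T) (f := fun j => f {j})
    simp only [hfκ, ← add_div]
    rw [ge_iff_le]
    gcongr ?_ / κ
    linear_combination h - (1 - κ) * hsum
  · intro X
    rw [← hempty]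
    exact hmonoκ ∅ X (empty_subset X)
  · intro X
    rw [hfκ, div_le_iff₀ hκpos]
    linarith [le_sum_singleton hsub hnorm X]
end

section
/- Let f be a monotone, normalized, submodular function on a finite ground set V with f({j}) > 0 for every j ∈ V, with total curvature κ_f satisfying 0 < κ_f < 1, and let f^κ be its curve-normalized version. Let α ≥ 1 and suppose w : V → ℝ≥0 is a nonnegative weight vector such that √(w(X)) ≤ f^κ(X) ≤ α · √(w(X)) for all X ⊆ V, where w(X) = Σ_{j∈X} w(j). Then the function f^{ea}(X) := κ_f · √(w(X)) + (1 − κ_f) · Σ_{j∈X} f({j}) satisfies f^{ea}(X) ≤ f(X) ≤ (α / (1 + (α − 1)(1 − κ_f))) · f^{ea}(X) for every nonempty X ⊆ V. -/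
/-!
Write `s = √(w(X))`, `g = f^κ(X)` and `M = ∑_{j∈X} f {j}`, so that `f(X) = κ g + (1-κ) M`.
The lower bound is `s ≤ g`. For the upper bound, subadditivity of `f`
(`le_sum_singleton_of_submodular`) gives `f(X) ≤ M`, and hence
`(1 + (α-1)(1-κ)) f(X) = f(X) + (α-1)(1-κ) f(X) ≤ κ g + α (1-κ) M ≤ α (κ s + (1-κ) M)`,
the last step being `g ≤ α s`.
-/

open Finset

theorem le_sum_singleton_of_submodular {V : Type*} [DecidableEq V] (f : Finset V → ℝ)
    (hsub : ∀ S T : Finset V, f S + f T ≥ f (S ∪ T) + f (S ∩ T))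
    (hnorm : f ∅ = 0) (X : Finset V) : f X ≤ ∑ j ∈ X, f {j} := by
  induction X using Finset.induction_on with
  | empty => simp [hnorm]
  | insert a S ha ih =>
    have h := hsub {a} S
    rw [Finset.singleton_inter_of_notMem ha, hnorm, ← Finset.insert_eq] at h
    rw [Finset.sum_insert ha]
    linarith

/-- Corollary 1: if `√(w(X)) ≤ f^κ(X) ≤ α √(w(X))` for all `X`, then
`f^{ea}(X) = κ √(w(X)) + (1-κ) ∑_{j∈X} f {j}` satisfies
`f^{ea}(X) ≤ f(X) ≤ (α / (1 + (α-1)(1-κ))) f^{ea}(X)`. -/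
theorem ellipsoid_curvature_approx
    {V : Type*} [Fintype V] [DecidableEq V] [Nonempty V]
    (f : Finset V → ℝ)
    (hsub : ∀ S T : Finset V, f S + f T ≥ f (S ∪ T) + f (S ∩ T))
    (hmono : ∀ S T : Finset V, S ⊆ T → f S ≤ f T)
    (hnorm : f ∅ = 0)
    (hpos : ∀ j : V, 0 < f {j})
    (κ : ℝ)
    (hκ : κ = 1 - univ.inf' univ_nonempty
      (fun j : V => (f univ - f (univ \ {j})) / f {j}))
    (hκ0 : 0 < κ) (hκ1 : κ < 1)
    (fκ : Finset V → ℝ)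
    (hfκ : ∀ X : Finset V, fκ X = (f X - (1 - κ) * ∑ j ∈ X, f {j}) / κ)
    (α : ℝ) (hα : 1 ≤ α)
    (w : V → ℝ) (hw : ∀ j : V, 0 ≤ w j)
    (hsand : ∀ X : Finset V,
      Real.sqrt (∑ j ∈ X, w j) ≤ fκ X ∧ fκ X ≤ α * Real.sqrt (∑ j ∈ X, w j))
    (X : Finset V) (hX : X.Nonempty) :
    κ * Real.sqrt (∑ j ∈ X, w j) + (1 - κ) * (∑ j ∈ X, f {j}) ≤ f X ∧
    f X ≤ (α / (1 + (α - 1) * (1 - κ))) *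
      (κ * Real.sqrt (∑ j ∈ X, w j) + (1 - κ) * (∑ j ∈ X, f {j})) := by
  have hM := le_sum_singleton_of_submodular f hsub hnorm X
  obtain ⟨h1, h2⟩ := hsand X
  have hg : κ * fκ X = f X - (1 - κ) * ∑ j ∈ X, f {j} := by
    rw [hfκ X]
    field_simp
  have h1' := mul_le_mul_of_nonneg_left h1 hκ0.le
  have h2' := mul_le_mul_of_nonneg_left h2 hκ0.le
  have hc : 0 ≤ (α - 1) * (1 - κ) := mul_nonneg (by linarith) (by linarith)
  have h3 := mul_le_mul_of_nonneg_left hM hc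
  refine ⟨by linarith, ?_⟩
  rw [div_mul_eq_mul_div, le_div_iff₀ (by linarith)]
  linarith
end

section
/- Let f be a submodular function on a finite ground set V. Then for every X ⊆ V and every k ∈ X, f(X) − f({k}) ≥ Σ_{j ∈ X∖{k}} (f(X) − f(X∖{j})). -/
/-!
Deleting the elements of a set `A` from `X` one at a time, submodularity says that each deletion
decreases `f` by at least what the same deletion from the full set `X` would. Summing,
`∑ j ∈ A, (f X - f (X \ {j})) ≤ f X - f (X \ A)` (`sum_gain_le_sub_sdiff`); the theorem is the case
`A = X \ {k}`, where `X \ A = {k}`.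
-/

open Finset

theorem sum_gain_le_sub_sdiff {V : Type*} [DecidableEq V] (f : Finset V → ℝ)
    (hsub : ∀ S T : Finset V, f S + f T ≥ f (S ∪ T) + f (S ∩ T)) (X A : Finset V) :
    ∑ j ∈ A, (f X - f (X \ {j})) ≤ f X - f (X \ A) := by
  induction A using Finset.induction_on with
  | empty => simp
  | insert a A ha ih =>
    rw [Finset.sum_insert ha]
    have h := hsub (X \ A) (X \ {a})
    have hunion : X \ A ∪ X \ {a} = X := by grind
    have hinter : (X \ A) ∩ (X \ {a}) = X \ insert a A := by grind
    rw [hunion, hinter] at h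
    linarith

/-- Fact 2: for a submodular `f`, any `X` and `k ∈ X`,
`f(X) - f({k}) ≥ ∑_{j ∈ X∖{k}} (f(X) - f(X∖{j}))`. -/
theorem submodular_gain_sum_bound
    {V : Type*} [Fintype V] [DecidableEq V]
    (f : Finset V → ℝ)
    (hsub : ∀ S T : Finset V, f S + f T ≥ f (S ∪ T) + f (S ∩ T))
    (X : Finset V) (k : V) (hk : k ∈ X) :
    f X - f {k} ≥ ∑ j ∈ X \ {k}, (f X - f (X \ {j})) := by
  have h := sum_gain_le_sub_sdiff f hsub X (X \ {k})
  have hX : X \ (X \ {k}) = {k} := by grind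
  rwa [hX] at h
end

section
/- Fix κ with 0 < κ ≤ 1 and a finite ground set V with |V| = n ≥ 2, and define f^κ(X) = κ · min{|X|, 1} + (1 − κ) · |X|. Then f^κ is a monotone, normalized, submodular function with total curvature equal to κ, and every modular function w with w(X) = Σ_{j∈X} w(j) ≥ f^κ(X) for all X ⊆ V satisfies w(X) ≥ (|X| / (1 + (|X| − 1)(1 − κ))) · f^κ(X) for every nonempty X ⊆ V. In particular, no modular upper bound on f^κ can approximate f^κ(X) within a factor better than |X| / (1 + (|X| − 1)(1 − κ)). -/
/-!
On a nonempty set `f X = κ + (1 - κ) |X| = 1 + (|X| - 1)(1 - κ)`, while `f ∅ = 0`. Hence the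
claimed lower bound `(|X| / (1 + (|X| - 1)(1 - κ))) * f X` is just `|X|`, and a modular upper bound
satisfies `w j ≥ f {j} = 1` for each `j`, so that `∑ j ∈ X, w j ≥ |X|`. Since `|V| ≥ 2`, deleting
one element leaves a nonempty set, so each last gain is `1 - κ`, and the curvature is `κ`.
-/

open Finset

/-- Lemma 4: the function `f^κ(X) = κ min{|X|,1} + (1-κ)|X|` is monotone,
normalized, submodular with total curvature `κ`, and every modular upper bound
`w` on `f^κ` satisfies `w(X) ≥ (|X| / (1 + (|X|-1)(1-κ))) f^κ(X)` for all
nonempty `X`. -/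
theorem modular_upper_bound_tight
    {V : Type*} [Fintype V] [DecidableEq V] [Nonempty V]
    (n : ℕ) (hn : Fintype.card V = n) (hn2 : 2 ≤ n)
    (κ : ℝ) (hκ0 : 0 < κ) (hκ1 : κ ≤ 1)
    (f : Finset V → ℝ)
    (hf : ∀ X : Finset V,
      f X = κ * min (X.card : ℝ) 1 + (1 - κ) * (X.card : ℝ)) :
    (∀ S T : Finset V, f S + f T ≥ f (S ∪ T) + f (S ∩ T)) ∧
    (∀ S T : Finset V, S ⊆ T → f S ≤ f T) ∧
    f ∅ = 0 ∧
    (1 - univ.inf' univ_nonempty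
      (fun j : V => (f univ - f (univ \ {j})) / f {j}) = κ) ∧
    (∀ w : V → ℝ, (∀ X : Finset V, f X ≤ ∑ j ∈ X, w j) →
      ∀ X : Finset V, X.Nonempty →
        ((X.card : ℝ) / (1 + ((X.card : ℝ) - 1) * (1 - κ))) * f X ≤
          ∑ j ∈ X, w j) := by
  have hempty : f ∅ = 0 := by simp [hf]
  have hne : ∀ X : Finset V, X.Nonempty → f X = κ + (1 - κ) * (X.card : ℝ) := by
    intro X hX
    have h1 : (1 : ℝ) ≤ X.card := by exact_mod_cast hX.card_pos
    rw [hf, min_eq_right h1, mul_one]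
  have hsingle : ∀ j : V, f {j} = 1 := by
    intro j
    rw [hne _ (singleton_nonempty j)]
    simp
  refine ⟨?_, ?_, hempty, ?_, ?_⟩
  · intro S T
    rcases S.eq_empty_or_nonempty with rfl | hS
    · simp [add_comm]
    rcases T.eq_empty_or_nonempty with rfl | hT
    · simp
    -- For nonempty `S`, `T` the left side has the maximal `min` terms, and cardinality is modular.
    have hcard : ((S ∪ T).card : ℝ) + (S ∩ T).card = S.card + T.card := by
      exact_mod_cast card_union_add_card_inter S T
    have h1 := mul_le_mul_of_nonneg_left (min_le_right ((S ∪ T).card : ℝ) 1) hκ0.le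
    have h2 := mul_le_mul_of_nonneg_left (min_le_right ((S ∩ T).card : ℝ) 1) hκ0.le
    have h3 := congrArg (fun x => (1 - κ) * x) hcard
    simp only [mul_add] at h3
    rw [hne S hS, hne T hT, hf (S ∪ T), hf (S ∩ T)]
    linarith
  · intro S T hST
    have hcard : (S.card : ℝ) ≤ T.card := by exact_mod_cast card_le_card hST
    have hκ : 0 ≤ 1 - κ := by linarith
    rw [hf, hf]
    gcongr
  · have hgain : ∀ j : V, (f univ - f (univ \ {j})) / f {j} = 1 - κ := by
      intro j
      have hc : (univ \ {j} : Finset V).card + 1 = (univ : Finset V).card := by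
        have := card_sdiff_add_card_eq_card (subset_univ ({j} : Finset V))
        simpa using this
      have hpos : (univ \ {j} : Finset V).Nonempty := by
        rw [← card_pos]
        rw [card_univ, hn] at hc
        omega
      rw [hsingle, hne _ univ_nonempty, hne _ hpos, ← hc]
      push_cast
      ring
    simp only [hgain, inf'_const]
    ring
  · intro w hw X hX
    have h1 : (1 : ℝ) ≤ X.card := by exact_mod_cast hX.card_pos
    have hfX : f X = 1 + ((X.card : ℝ) - 1) * (1 - κ) := by
      rw [hne X hX]
      ring
    have hpos : 0 < 1 + ((X.card : ℝ) - 1) * (1 - κ) := by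
      have := mul_nonneg (sub_nonneg.2 h1) (sub_nonneg.2 hκ1)
      linarith
    rw [hfX, div_mul_cancel₀ _ hpos.ne']
    calc (X.card : ℝ) = ∑ _j ∈ X, (1 : ℝ) := by simp
      _ ≤ ∑ j ∈ X, w j := sum_le_sum fun j _ => by simpa [hsingle] using hw {j}
end

section
/- Let w_1, …, w_k : V → ℝ≥0 be nonnegative weight vectors on a finite ground set V, let λ_1, …, λ_k ≥ 0, let a ∈ (0, 1], and define f(X) = Σ_{i=1}^k λ_i · (w_i(X))^a, where w_i(X) = Σ_{j∈X} w_i(j). Then for every nonempty X ⊆ V with f({j}) > 0 for all j ∈ X, the curvature κ̂_f(X) satisfies κ̂_f(X) ≤ 1 − a / |X|^{1−a}. -/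
/-!
The bound holds for each function `X ↦ w(X)^a` separately and then follows for nonnegative
combinations. Write `W = w(X)` and `n = |X|`. Bernoulli's inequality (concavity of `t ↦ t^a` at `W`)
gives `W^a - (W - w_j)^a ≥ a (w_j / W) W^a`, and summing over `j ∈ X` bounds the total gain below by
`a W^a`. The power-mean inequality (Jensen for `t ↦ t^a`) gives `∑ w_j^a ≤ n^(1-a) W^a`. Together
they bound the total gain below by `(a / n^(1-a)) ∑ w_j^a`.
-/

open Finset

/-- Power-mean inequality for exponents in `[0, 1]`. -/
lemma sum_rpow_le_card_rpow_mul {V : Type*} (X : Finset V) (hX : X.Nonempty)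
    (w : V → ℝ) (hw : ∀ j, 0 ≤ w j) (a : ℝ) (ha0 : 0 ≤ a) (ha1 : a ≤ 1) :
    ∑ j ∈ X, w j ^ a ≤ (X.card : ℝ) ^ (1 - a) * (∑ j ∈ X, w j) ^ a := by
  have hn : (0 : ℝ) < X.card := by exact_mod_cast hX.card_pos
  have hS : 0 ≤ ∑ j ∈ X, w j := Finset.sum_nonneg fun j _ => hw j
  have h := (Real.concaveOn_rpow ha0 ha1).le_map_sum (t := X)
    (w := fun _ => (X.card : ℝ)⁻¹) (p := w) (fun _ _ => by positivity)
    (by rw [Finset.sum_const, nsmul_eq_mul, mul_inv_cancel₀ hn.ne']) (fun j _ => hw j)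
  simp only [smul_eq_mul, ← Finset.mul_sum] at h
  rw [Real.mul_rpow (by positivity) hS, Real.inv_rpow hn.le, inv_mul_le_iff₀ hn] at h
  rw [Real.rpow_sub hn, Real.rpow_one, div_eq_mul_inv, mul_assoc]
  exact h

/-- Concavity: removing weight `x` from a total `W` loses at least the fraction `a x / W`
of `W ^ a`. -/
lemma mul_div_mul_rpow_le_sub (W x a : ℝ) (hW : 0 < W) (hxW : x ≤ W)
    (ha0 : 0 ≤ a) (ha1 : a ≤ 1) :
    a * (x / W) * W ^ a ≤ W ^ a - (W - x) ^ a := by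
  have hle : x / W ≤ 1 := (div_le_one hW).2 hxW
  have hb := rpow_one_add_le_one_add_mul_self (s := -(x / W)) (by linarith) ha0 ha1
  have he : W - x = W * (1 + -(x / W)) := by field_simp; ring
  rw [he, Real.mul_rpow hW.le (by linarith)]
  nlinarith [mul_le_mul_of_nonneg_left hb (Real.rpow_nonneg hW.le a)]

/-- The curvature bound for a single concave-over-modular function, in cleared form. -/
lemma single_gain_bound {V : Type*} [DecidableEq V] (X : Finset V) (hX : X.Nonempty)
    (w : V → ℝ) (hw : ∀ j, 0 ≤ w j) (a : ℝ) (ha0 : 0 < a) (ha1 : a ≤ 1) :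
    a / (X.card : ℝ) ^ (1 - a) * ∑ j ∈ X, w j ^ a ≤
      ∑ j ∈ X, ((∑ l ∈ X, w l) ^ a - (∑ l ∈ X \ {j}, w l) ^ a) := by
  have hn : (0 : ℝ) < X.card := by exact_mod_cast hX.card_pos
  have hc : 0 < (X.card : ℝ) ^ (1 - a) := Real.rpow_pos_of_pos hn _
  have hpm := sum_rpow_le_card_rpow_mul X hX w hw a ha0.le ha1
  have hupper : a / (X.card : ℝ) ^ (1 - a) * ∑ j ∈ X, w j ^ a ≤ a * (∑ l ∈ X, w l) ^ a := by
    rw [div_mul_eq_mul_div, div_le_iff₀ hc]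
    nlinarith [mul_le_mul_of_nonneg_left hpm ha0.le]
  refine hupper.trans ?_
  rcases (Finset.sum_nonneg fun j (_ : j ∈ X) => hw j).eq_or_lt with h0 | hW
  · rw [← h0, Real.zero_rpow ha0.ne', mul_zero]
    refine Finset.sum_nonneg fun j _ => ?_
    have hsub : ∑ l ∈ X \ {j}, w l ≤ ∑ l ∈ X, w l :=
      Finset.sum_le_sum_of_subset_of_nonneg Finset.sdiff_subset fun l _ _ => hw l
    have hz : ∑ l ∈ X \ {j}, w l = 0 :=
      le_antisymm (hsub.trans h0.ge) (Finset.sum_nonneg fun l _ => hw l)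
    rw [hz, Real.zero_rpow ha0.ne', sub_zero]
  · calc a * (∑ l ∈ X, w l) ^ a
        = ∑ j ∈ X, a * (w j / ∑ l ∈ X, w l) * (∑ l ∈ X, w l) ^ a := by
          rw [← Finset.sum_mul, ← Finset.mul_sum, ← Finset.sum_div, div_self hW.ne', mul_one]
      _ ≤ _ := by
          refine Finset.sum_le_sum fun j hj => ?_
          have hd : ∑ l ∈ X \ {j}, w l = ∑ l ∈ X, w l - w j := by
            rw [← Finset.sum_sdiff (Finset.singleton_subset_iff.2 hj), Finset.sum_singleton]
            ring
          rw [hd]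
          exact mul_div_mul_rpow_le_sub _ _ _ hW
            (Finset.single_le_sum (fun l _ => hw l) hj) ha0.le ha1

/-- For `f(X) = ∑_i λ_i (w_i(X))^a` with `a ∈ (0,1]`, the curvature satisfies
`κ̂_f(X) ≤ 1 - a / |X|^{1-a}` for every nonempty `X` with positive singleton
values. -/
theorem concave_over_modular_curvature
    {V : Type*} [Fintype V] [DecidableEq V]
    (k : ℕ) (w : Fin k → V → ℝ) (hw : ∀ i j, 0 ≤ w i j)
    (lam : Fin k → ℝ) (hlam : ∀ i, 0 ≤ lam i)
    (a : ℝ) (ha0 : 0 < a) (ha1 : a ≤ 1)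
    (f : Finset V → ℝ)
    (hf : ∀ X : Finset V, f X = ∑ i, lam i * (∑ j ∈ X, w i j) ^ a)
    (X : Finset V) (hX : X.Nonempty)
    (hpos : ∀ j ∈ X, 0 < f {j})
    (κhat : ℝ)
    (hκhat : κhat = 1 - (∑ j ∈ X, (f X - f (X \ {j}))) / (∑ j ∈ X, f {j})) :
    κhat ≤ 1 - a / (X.card : ℝ) ^ (1 - a) := by
  have hden : 0 < ∑ j ∈ X, f {j} := Finset.sum_pos hpos hX
  rw [hκhat]
  refine sub_le_sub_left ?_ 1
  rw [le_div_iff₀ hden]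
  have h1 : ∑ j ∈ X, f {j} = ∑ i, lam i * ∑ j ∈ X, w i j ^ a := by
    simp only [hf, Finset.sum_singleton, Finset.mul_sum]
    exact Finset.sum_comm
  have h2 : ∑ j ∈ X, (f X - f (X \ {j})) = ∑ i, lam i *
      ∑ j ∈ X, ((∑ l ∈ X, w i l) ^ a - (∑ l ∈ X \ {j}, w i l) ^ a) := by
    simp only [hf, ← Finset.sum_sub_distrib, ← mul_sub]
    rw [Finset.sum_comm]
    simp only [Finset.mul_sum]
  rw [h1, h2, Finset.mul_sum]
  refine Finset.sum_le_sum fun i _ => ?_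
  rw [mul_left_comm]
  exact mul_le_mul_of_nonneg_left (single_gain_bound X hX (w i) (hw i) a ha0 ha1) (hlam i)
end

section
/- Let V be a finite ground set with |V| = n, let R ⊆ V with |R| = α, let α, β be integers with 1 ≤ β, 1 ≤ α ≤ n − 1, and 2α ≤ n + β, and let κ ∈ [0, 1]. Write R̄ = V ∖ R. Then the function f_κ^R(X) = κ · min{β + |X ∩ R̄|, |X|, α} + (1 − κ) · |X| is a monotone, normalized, submodular function on V, f_κ^R({j}) = 1 for every j ∈ V, and its total curvature equals κ. -/
/-!
With `a = |X ∩ R|` and `b = |X ∩ R̄|`, the truncated part of `f` is the integer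
`g(X) = min (b + min β a) α`. The map `X ↦ b + min β a` is monotone and submodular (a modular
function plus a concave function of a modular one), and truncating a monotone submodular function
at `α` preserves both properties; `f` is the convex combination `κ g + (1 - κ) |X|`.

For the curvature, `2α ≤ n + β` gives `g(V) = α`, so every marginal `f(V) - f(V ∖ {j})` is at least
`1 - κ` because `g ≤ α`. Removing `j ∈ R` leaves `b = n - α` unchanged and
`|V ∖ {j}| = n - 1 ≥ α`, so `g(V ∖ {j}) = α` and the bound is attained.
-/

open Finset

/-- The truncated part `min {β + |X ∩ R̄|, |X|, α}` of the function, as a natural number. -/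
def hidingTrunc {V : Type*} [Fintype V] [DecidableEq V] (R : Finset V) (α β : ℕ)
    (X : Finset V) : ℕ :=
  min (min (β + (X ∩ (univ \ R)).card) X.card) α

lemma card_split {V : Type*} [Fintype V] [DecidableEq V] (R X : Finset V) :
    X.card = (X ∩ R).card + (X ∩ (univ \ R)).card := by
  rw [← card_inter_add_card_sdiff X R]
  congr 2
  ext x
  simp

lemma card_union_inter_restrict {V : Type*} [DecidableEq V] (S T A : Finset V) :
    ((S ∪ T) ∩ A).card + ((S ∩ T) ∩ A).card = (S ∩ A).card + (T ∩ A).card := by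
  rw [union_inter_distrib_right, inter_inter_distrib_right]
  exact card_union_add_card_inter _ _

lemma hidingTrunc_mono {V : Type*} [Fintype V] [DecidableEq V] (R : Finset V) (α β : ℕ)
    {S T : Finset V} (h : S ⊆ T) : hidingTrunc R α β S ≤ hidingTrunc R α β T := by
  have h1 := card_le_card h
  have h2 := card_le_card (inter_subset_inter_right h : S ∩ (univ \ R) ⊆ T ∩ (univ \ R))
  unfold hidingTrunc
  omega

lemma hidingTrunc_submodular {V : Type*} [Fintype V] [DecidableEq V] (R : Finset V) (α β : ℕ)
    (S T : Finset V) :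
    hidingTrunc R α β (S ∪ T) + hidingTrunc R α β (S ∩ T)
      ≤ hidingTrunc R α β S + hidingTrunc R α β T := by
  have mono : ∀ (A : Finset V) {X Y : Finset V}, X ⊆ Y → (X ∩ A).card ≤ (Y ∩ A).card :=
    fun A _ _ h => card_le_card (inter_subset_inter_right h)
  have r := card_union_inter_restrict S T R
  have c := card_union_inter_restrict S T (univ \ R)
  have r1 := mono R (inter_subset_left : S ∩ T ⊆ S)
  have r2 := mono R (inter_subset_right : S ∩ T ⊆ T)
  have c1 := mono (univ \ R) (inter_subset_left : S ∩ T ⊆ S)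
  have c2 := mono (univ \ R) (inter_subset_right : S ∩ T ⊆ T)
  unfold hidingTrunc
  rw [card_split R (S ∪ T), card_split R (S ∩ T), card_split R S, card_split R T]
  generalize ((S ∪ T) ∩ R).card = aU at *
  generalize ((S ∩ T) ∩ R).card = aI at *
  generalize ((S ∪ T) ∩ (univ \ R)).card = bU at *
  generalize ((S ∩ T) ∩ (univ \ R)).card = bI at *
  omega

/-- The hidden function `f_κ^R(X) = κ min{β + |X ∩ R̄|, |X|, α} + (1-κ)|X|`
(with `1 ≤ β`, `1 ≤ α ≤ n-1`, `2α ≤ n + β`, `|R| = α`) is monotone,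
normalized, submodular, has unit singleton values, and total curvature `κ`. -/
theorem hiding_function_fR_properties
    {V : Type*} [Fintype V] [DecidableEq V] [Nonempty V]
    (n : ℕ) (hn : Fintype.card V = n)
    (R : Finset V) (α β : ℕ) (hR : R.card = α)
    (hβ : 1 ≤ β) (hα1 : 1 ≤ α) (hα2 : α + 1 ≤ n) (hαβ : 2 * α ≤ n + β)
    (κ : ℝ) (hκ0 : 0 ≤ κ) (hκ1 : κ ≤ 1)
    (f : Finset V → ℝ)
    (hf : ∀ X : Finset V,
      f X = κ * min (min ((β : ℝ) + ((X ∩ (univ \ R)).card : ℝ))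
        ((X.card : ℝ))) ((α : ℝ)) + (1 - κ) * (X.card : ℝ)) :
    (∀ S T : Finset V, f S + f T ≥ f (S ∪ T) + f (S ∩ T)) ∧
    (∀ S T : Finset V, S ⊆ T → f S ≤ f T) ∧
    f ∅ = 0 ∧
    (∀ j : V, f {j} = 1) ∧
    1 - univ.inf' univ_nonempty
      (fun j : V => (f univ - f (univ \ {j})) / f {j}) = κ := by
  have hg : ∀ X, f X = κ * (hidingTrunc R α β X : ℝ) + (1 - κ) * (X.card : ℝ) := by
    intro X
    rw [hf X]
    unfold hidingTrunc
    push_cast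
    rfl
  have hκ' : 0 ≤ 1 - κ := by linarith
  have hsingle : ∀ j : V, f {j} = 1 := by
    intro j
    have : hidingTrunc R α β {j} = 1 := by
      unfold hidingTrunc
      rw [card_singleton]
      omega
    rw [hg, this, card_singleton]
    push_cast
    ring
  refine ⟨?_, ?_, ?_, hsingle, ?_⟩
  · intro S T
    have h1 : (hidingTrunc R α β (S ∪ T) : ℝ) + hidingTrunc R α β (S ∩ T)
        ≤ hidingTrunc R α β S + hidingTrunc R α β T := by
      exact_mod_cast hidingTrunc_submodular R α β S T
    have h2 : ((S ∪ T).card : ℝ) + (S ∩ T).card = S.card + T.card := by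
      exact_mod_cast card_union_add_card_inter S T
    have h3 := mul_le_mul_of_nonneg_left h1 hκ0
    have h4 := congrArg (fun x => (1 - κ) * x) h2
    simp only [hg]
    simp only [mul_add] at h3 h4
    linarith
  · intro S T h
    rw [hg, hg]
    have h1 := hidingTrunc_mono R α β h
    have h2 := card_le_card h
    gcongr
  · simp [hg, hidingTrunc]
  · have hcompl : (univ \ R).card = n - α := by
      rw [card_sdiff_of_subset (subset_univ R), card_univ, hn, hR]
    have huniv : hidingTrunc R α β univ = α := by
      unfold hidingTrunc
      rw [univ_inter, hcompl, card_univ, hn]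
      omega
    have hcard : ∀ j : V, (((univ \ {j} : Finset V)).card : ℝ) = n - 1 := by
      intro j
      rw [card_sdiff_of_subset (subset_univ _), card_univ, hn, card_singleton,
        Nat.cast_sub (by omega), Nat.cast_one]
    have hmarg : ∀ j : V, (f univ - f (univ \ {j})) / f {j}
        = κ * ((α : ℝ) - hidingTrunc R α β (univ \ {j})) + (1 - κ) := by
      intro j
      rw [hsingle, hg, hg, huniv, hcard, card_univ, hn]
      ring
    have hinf : univ.inf' univ_nonempty
        (fun j : V => (f univ - f (univ \ {j})) / f {j}) = 1 - κ := by
      apply le_antisymm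
      · -- The minimum is attained at any element of `R`.
        obtain ⟨j, hj⟩ : R.Nonempty := card_pos.mp (by omega)
        refine (inf'_le _ (mem_univ j)).trans ?_
        have hsub : (univ \ {j}) ∩ (univ \ R) = univ \ R := by
          apply inter_eq_right.mpr
          exact sdiff_subset_sdiff subset_rfl (singleton_subset_iff.mpr hj)
        have : hidingTrunc R α β (univ \ {j}) = α := by
          unfold hidingTrunc
          rw [hsub, hcompl, card_sdiff_of_subset (subset_univ _), card_univ, hn, card_singleton]
          omega
        rw [hmarg, this]
        simp
      · refine le_inf' _ _ fun j _ => ?_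
        rw [hmarg]
        have h1 : (hidingTrunc R α β (univ \ {j}) : ℝ) ≤ α := by
          exact_mod_cast min_le_right _ _
        have := mul_nonneg hκ0 (sub_nonneg.mpr h1)
        linarith
    rw [hinf]
    ring
end
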